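/- arXiv:1806.10035 — 2 statements merged into one kernel-verified Lean document; each statement's English description precedes it below -/
import Mathlib

section
/- Let R be a local ring with finitely generated regular maximal ideal M, and let R' be the integral closure of R in the Nagata transform T(M). The following are equivalent: (1) M is the radical of a principal ideal of R; (2) R' is a semilocal ring in which every maximal ideal is a principal ideal; (3) there is an integral overring of R in which every maximal ideal is a principal ideal; (4) T(M) is a semilocal ring for which M·T(M) = T(M). -/
/-!
Write `M` for the maximal ideal of `R` and `T` for its Nagata transform. Everything rests on two
facts about a principal maximal ideal `(y)` with `y` regular: `⋂ₖ (yᵏ)` is prime, and it contains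
every prime properly contained in `(y)`. Hence, in a ring all of whose maximal ideals `N` are
generated by regular elements `y_N`, every nonmaximal prime lies in one of the primes `⋂ₖ (y_Nᵏ)`.

* (1 → 2) If `M = rad(a)`, then `a` is regular, `T = R[1/a]`, and every `R/(aⁿ)` is Artinian, since
  `M` is finitely generated. Let `S = R'`. The descending chain of the ideals `(aⁿS ∩ R) + (a)`
  stabilizes, which yields `aᵐS ⊆ R + aᵐ⁺¹S` for some `m`; so multiplication by `aᵐ` embeds `S/aS`
  in a quotient of `R/(aᵐ⁺¹)`, and `S/aS` is Artinian. As every maximal ideal `N` of `S` contains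
  `a`, there are finitely many of them and each is finitely generated. Moreover `N` is associated
  to `S/aS`, so `bN ⊆ aS` for some `b ∉ aS`. If `bN ⊆ aN`, then `b/a` would be integral by the
  determinant trick, hence in `S`, a contradiction. So `N·(a, b) = (a)`, `N` is invertible, and
  invertible ideals of a semilocal ring are principal.
* (2 → 3) `R'` is an integral overring of `R`, as `T` is a subring of `Q(R)`.
* (3 → 1) If `S` is an integral overring with principal maximal ideals, all primes of `S/MS` are
  maximal and principal, so `S/MS` is Noetherian by Cohen's theorem, then Artinian, and `S` is
  semilocal. No `⋂ₖ (y_Nᵏ)` lies over `M`, so by prime avoidance some `a ∈ M` is outside all of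
  them. The primes of `S` containing `a` are therefore maximal, and by lying over `M = rad(a)`.
* (1 → 4) Each maximal ideal of `T = S[1/a]` is the extension of one of the `⋂ₖ (y_Nᵏ)`, and `a` is
  a unit of `T` lying in `M`.
* (4 → 1) Prime avoidance against the contractions of the maximal ideals of `T` gives `a ∈ M` that
  is a unit of `T`. Then `a⁻¹Mᵏ ⊆ R` for some `k`, so `Mᵏ ⊆ (a)`.
-/

set_option synthInstance.maxHeartbeats 400000
set_option maxHeartbeats 800000

open scoped nonZeroDivisors

/-- A semilocal ring: a commutative ring with only finitely many maximal ideals. -/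
def IsSemilocalRing (R : Type*) [CommRing R] : Prop := {I : Ideal R | I.IsMaximal}.Finite

/-- The Nagata transform `T(I) = ⋃_{k>0} (R :_{Q(R)} I^k)` of an ideal `I`, as a subalgebra
of the total quotient ring of `R`.  (The union is already a subring containing `R`, so
taking `Algebra.adjoin` of it does not change the underlying set.) -/
def nagataTransform (R : Type*) [CommRing R] (I : Ideal R) :
    Subalgebra R (Localization R⁰) :=
  Algebra.adjoin R (⋃ k : ℕ,
    ((1 / IsLocalization.coeSubmodule (Localization R⁰) (I ^ (k + 1)) :
      Submodule R (Localization R⁰)) : Set (Localization R⁰)))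

/-! ### Powers of a regular principal maximal ideal -/

/-- The intersection `⋂ₖ (yᵏ)` of the powers of the principal ideal `(y)`. When `y` is regular and
`(y)` is maximal, this is the largest prime properly contained in `(y)`. -/
def powInf {S : Type*} [CommRing S] (y : S) : Ideal S := ⨅ k : ℕ, Ideal.span {y ^ k}

lemma mem_powInf {S : Type*} [CommRing S] {y x : S} : x ∈ powInf y ↔ ∀ k, y ^ k ∣ x := by
  simp [powInf, Ideal.mem_span_singleton]

lemma powInf_le {S : Type*} [CommRing S] (y : S) : powInf y ≤ Ideal.span {y} := fun x hx => by
  simpa [Ideal.mem_span_singleton] using mem_powInf.1 hx 1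

/-- An element outside `⋂ (yᵏ)` is `yᵏ` times an element outside `(y)`. -/
lemma exists_pow_mul_of_notMem_powInf {S : Type*} [CommRing S] {y x : S} (hx : x ∉ powInf y) :
    ∃ k u, x = y ^ k * u ∧ ¬ y ∣ u := by
  classical
  rw [mem_powInf] at hx
  push Not at hx
  have h0 : Nat.find hx ≠ 0 := fun h => by
    have := Nat.find_spec hx
    rw [h] at this
    simp at this
  obtain ⟨k, hk⟩ := Nat.exists_eq_succ_of_ne_zero h0
  have h1 : y ^ k ∣ x := not_not.1 (Nat.find_min hx (m := k) (by omega))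
  obtain ⟨u, rfl⟩ := h1
  refine ⟨k, u, rfl, fun hu => Nat.find_spec hx ?_⟩
  rw [hk, pow_succ]
  exact mul_dvd_mul_left _ hu

lemma powInf_isPrime {S : Type*} [CommRing S] {y : S} (hy : y ∈ S⁰)
    (hp : (Ideal.span {y}).IsPrime) : (powInf y).IsPrime := by
  refine ⟨fun h => hp.ne_top (top_le_iff.1 (h ▸ powInf_le y)), fun {s t} hst => ?_⟩
  by_contra! hcon
  obtain ⟨k, u, rfl, hu⟩ := exists_pow_mul_of_notMem_powInf hcon.1
  obtain ⟨l, v, rfl, hv⟩ := exists_pow_mul_of_notMem_powInf hcon.2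
  obtain ⟨w, hw⟩ := mem_powInf.1 hst (k + l + 1)
  have h1 : u * v = y * w := by
    refine (mul_cancel_left_mem_nonZeroDivisors (pow_mem hy (k + l))).1 ?_
    linear_combination hw
  have h2 : u * v ∈ Ideal.span {y} := Ideal.mem_span_singleton.2 ⟨w, h1⟩
  rcases hp.mem_or_mem h2 with h | h
  · exact hu (Ideal.mem_span_singleton.1 h)
  · exact hv (Ideal.mem_span_singleton.1 h)

lemma powInf_ne {S : Type*} [CommRing S] {y : S} (hy : y ∈ S⁰)
    (hp : (Ideal.span {y}).IsPrime) : powInf y ≠ Ideal.span {y} := by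
  intro h
  have : y ∈ powInf y := h ▸ Ideal.mem_span_singleton_self y
  obtain ⟨w, hw⟩ := mem_powInf.1 this 2
  have h1 : y * w = 1 := by
    refine (mul_cancel_left_mem_nonZeroDivisors hy).1 ?_
    linear_combination -hw
  exact hp.ne_top (Ideal.eq_top_of_isUnit_mem _ (Ideal.mem_span_singleton_self y)
    (.of_mul_eq_one w h1))

/-- The primes properly contained in `(y)` all lie in `⋂ (yᵏ)`. -/
lemma le_powInf {S : Type*} [CommRing S] {y : S} (hmax : (Ideal.span {y}).IsMaximal)
    {Q : Ideal S} [hQ : Q.IsPrime] (hle : Q ≤ Ideal.span {y}) (hne : ¬ Q.IsMaximal) :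
    Q ≤ powInf y := by
  have hyQ : y ∉ Q := fun h => hne <| by
    rwa [le_antisymm hle ((Ideal.span_singleton_le_iff_mem _).2 h)]
  have key : ∀ k : ℕ, ∀ q ∈ Q, ∃ q' ∈ Q, q = y ^ k * q' := by
    intro k
    induction k with
    | zero => exact fun q hq => ⟨q, hq, by simp⟩
    | succ k ih =>
      intro q hq
      obtain ⟨q', hq', rfl⟩ := ih q hq
      obtain ⟨w, rfl⟩ := Ideal.mem_span_singleton.1 (hle hq')
      exact ⟨w, (hQ.mem_or_mem hq').resolve_left hyQ, by ring⟩
  exact fun q hq => mem_powInf.2 fun k => by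
    obtain ⟨q', -, h⟩ := key k q hq
    exact ⟨q', h⟩

/-! ### Integral extensions of a local ring -/

open IsLocalRing

section
variable {R : Type*} [CommRing R] [IsLocalRing R] {S : Type*} [CommRing S] [Algebra R S]
  [Algebra.IsIntegral R S]

lemma comap_isMaximal (N : Ideal S) [N.IsMaximal] :
    N.comap (algebraMap R S) = maximalIdeal R :=
  eq_maximalIdeal (Ideal.isMaximal_comap_of_isIntegral_of_isMaximal N)

lemma isMaximal_of_maximalIdeal_le (N : Ideal S) [hN : N.IsPrime]
    (h : maximalIdeal R ≤ N.comap (algebraMap R S)) : N.IsMaximal := by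
  refine Ideal.isMaximal_of_isIntegral_of_isMaximal_comap (R := R) N ?_
  rw [← (maximalIdeal.isMaximal R).eq_of_le (Ideal.IsPrime.ne_top (hN.comap _)) h]
  exact maximalIdeal.isMaximal R

/-- A maximal ideal of `S` contains the image of `r`, so a generator of it divides a regular
element. -/
lemma exists_regular_generator {r : R} (hr : r ∈ maximalIdeal R) (hrS : algebraMap R S r ∈ S⁰)
    (hprin : ∀ N : Ideal S, N.IsMaximal → N.IsPrincipal) (N : Ideal S) (hN : N.IsMaximal) :
    ∃ y ∈ S⁰, N = Ideal.span {y} := by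
  obtain ⟨y, hy⟩ := hprin N hN
  refine ⟨y, ?_, hy⟩
  have : algebraMap R S r ∈ N := by
    rw [← comap_isMaximal (R := R) N] at hr
    exact hr
  rw [hy] at this
  obtain ⟨w, hw⟩ := Ideal.mem_span_singleton.1 this
  rw [hw] at hrS
  exact (mul_mem_nonZeroDivisors.1 hrS).1

variable (R) in
include R in
/-- Every prime of `S ⧸ MS` is maximal and principal, so `S ⧸ MS` is Noetherian (Cohen) of dimension
zero, and every maximal ideal of `S` contains `MS`. -/
lemma isSemilocalRing_of_forall_isPrincipal
    (hprin : ∀ N : Ideal S, N.IsMaximal → N.IsPrincipal) : IsSemilocalRing S := by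
  let I := (maximalIdeal R).map (algebraMap R S)
  have hmax : ∀ p : Ideal (S ⧸ I), p.IsPrime → (p.comap (Ideal.Quotient.mk I)).IsMaximal := by
    intro p hp
    refine isMaximal_of_maximalIdeal_le (R := R) _ ?_
    rw [← Ideal.map_le_iff_le_comap]
    change I ≤ _
    exact (Ideal.mk_ker (I := I)).symm.le.trans (Ideal.ker_le_comap _)
  have : IsNoetherianRing (S ⧸ I) := .of_prime fun p hp => by
    have := (hprin _ (hmax p hp))
    rw [← Ideal.map_comap_of_surjective _ Ideal.Quotient.mk_surjective p]
    obtain ⟨y, hy⟩ := this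
    refine Ideal.FG.map ⟨{y}, ?_⟩ _
    rw [hy]; simp
  have : Ring.KrullDimLE 0 (S ⧸ I) := Ring.krullDimLE_zero_iff.mpr fun p hp => by
    have := hmax p hp
    rw [← Ideal.map_comap_of_surjective _ Ideal.Quotient.mk_surjective p]
    refine (Ideal.map_eq_top_or_isMaximal_of_surjective _ Ideal.Quotient.mk_surjective this).resolve_left ?_
    rw [Ideal.map_comap_of_surjective _ Ideal.Quotient.mk_surjective p]
    exact hp.ne_top
  have : IsArtinianRing (S ⧸ I) := IsNoetherianRing.isArtinianRing_of_krullDimLE_zero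
  have hfin := IsArtinianRing.setOfPred_isPrime_finite (S ⧸ I)
  refine (hfin.image (Ideal.comap (Ideal.Quotient.mk I))).subset fun N (hN : N.IsMaximal) => ?_
  have hIN : I ≤ N := Ideal.map_le_iff_le_comap.2 (comap_isMaximal (R := R) N).ge
  refine ⟨N.map (Ideal.Quotient.mk I), ?_, ?_⟩
  · exact Ideal.map_isPrime_of_surjective Ideal.Quotient.mk_surjective (by simpa using hIN)
  · rw [Ideal.comap_map_of_surjective' _ Ideal.Quotient.mk_surjective]
    simpa using hIN

/-- Any `a ∈ M` outside the finitely many contracted primes `⋂ₖ (y_Nᵏ)` has radical `M`: a prime of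
`S` over a prime containing `a` has to be maximal. -/
lemma exists_radical_of_forall_isPrincipal (hinj : Function.Injective (algebraMap R S))
    {r : R} (hr : r ∈ maximalIdeal R) (hrS : algebraMap R S r ∈ S⁰)
    (hprin : ∀ N : Ideal S, N.IsMaximal → N.IsPrincipal) :
    ∃ a : R, maximalIdeal R = (Ideal.span {a}).radical := by
  have hfin : {I : Ideal S | I.IsMaximal}.Finite := 
    isSemilocalRing_of_forall_isPrincipal R hprin
  choose! y hyreg hy using exists_regular_generator hr hrS hprin
  have hprime : ∀ N : Ideal S, N.IsMaximal → (powInf (y N)).IsPrime := fun N hN =>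
    powInf_isPrime (hyreg N hN) (hy N hN ▸ hN.isPrime)
  have hnot : ¬ ((maximalIdeal R : Set R) ⊆ ⋃ N ∈ {I : Ideal S | I.IsMaximal},
      ((powInf (y N)).comap (algebraMap R S) : Ideal R)) := by
    rw [Ideal.subset_union_prime_finite hfin (f := fun N => (powInf (y N)).comap (algebraMap R S))
      ⊤ ⊤ (fun N hN _ _ => (hprime N hN).comap _)]
    rintro ⟨N, hN, hle⟩
    have := hprime N hN
    have hmax := isMaximal_of_maximalIdeal_le _ hle
    have h1 := powInf_le (y N)
    rw [← hy N hN] at h1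
    have h2 := hmax.eq_of_le hN.ne_top h1
    exact powInf_ne (hyreg N hN) (hy N hN ▸ hN.isPrime) (h2.trans (hy N hN))
  obtain ⟨a, haM, ha⟩ := Set.not_subset.1 hnot
  refine ⟨a, le_antisymm ?_ ?_⟩
  · rw [Ideal.radical_eq_sInf]
    refine le_sInf fun p ⟨hap, hp⟩ => ?_
    obtain ⟨Q, -, hQ, rfl⟩ := Ideal.exists_ideal_over_prime_of_isIntegral p (⊥ : Ideal S)
      (by rw [← RingHom.ker_eq_comap_bot, (RingHom.injective_iff_ker_eq_bot _).1 hinj]; exact bot_le)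
    have haQ : algebraMap R S a ∈ Q := (Ideal.span_singleton_le_iff_mem (Q.comap (algebraMap R S))).1 hap
    by_cases hQm : Q.IsMaximal
    · exact (comap_isMaximal Q).ge
    · exfalso
      obtain ⟨N, hN, hQN⟩ := Q.exists_le_maximal hQ.ne_top
      refine ha (Set.mem_biUnion (x := N) hN ?_)
      exact le_powInf (hy N hN ▸ hN) (hy N hN ▸ hQN) hQm haQ
  · rw [(maximalIdeal.isMaximal R).isPrime.radical_le_iff]
    exact (Ideal.span_singleton_le_iff_mem _).2 haM

end

/-! ### Artinian quotients and invertible maximal ideals -/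

section
open Polynomial

/-- Determinant trick: if `x` maps a finitely generated submodule containing a unit into itself,
then `x` is integral. -/
lemma isIntegral_of_mul_mem {S T : Type*} [CommRing S] [CommRing T] [Algebra S T]
    (N : Submodule S T) (hfg : N.FG) {c : T} (hc : IsUnit c) (hcN : c ∈ N) (x : T)
    (hx : ∀ n ∈ N, x * n ∈ N) : IsIntegral S x := by
  have : Module.Finite S N := Module.Finite.iff_fg.2 hfg
  let f : Module.End S N := (LinearMap.mulLeft S x).restrict hx
  obtain ⟨p, hp, hp0⟩ := LinearMap.exists_monic_and_aeval_eq_zero S f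
  have key : ∀ (q : S[X]) (n : N), ((aeval f q n : N) : T) = aeval x q * n := by
    intro q
    induction q using Polynomial.induction_on with
    | C s => intro n; simp [Module.algebraMap_end_apply, Algebra.smul_def]
    | add p q hp hq => intro n; simp [hp, hq, add_mul]
    | monomial k s ih =>
      intro n
      rw [pow_succ, ← mul_assoc, map_mul _ _ X, map_mul _ _ X, aeval_X, aeval_X, Module.End.mul_apply, ih]
      simp [f, mul_assoc]
      rfl
  refine ⟨p, hp, ?_⟩
  have := key p ⟨c, hcN⟩
  rw [hp0] at this
  exact (hc.mul_left_eq_zero).1 this.symm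

end

section
variable {R : Type*} [CommRing R] {S : Type*} [CommRing S] [Algebra R S]

/-- When `R ⧸ (a)` is Artinian, a descending chain of ideals of `R` is eventually constant
modulo `(a)`. -/
lemma exists_stable (a : R) [IsArtinianRing (R ⧸ Ideal.span {a})] (J : ℕ → Ideal R)
    (hJ : Antitone J) :
    ∃ m, ∀ n, m ≤ n → ∀ u ∈ J n, ∃ w ∈ J (n + 1), ∃ c, u = w + a * c := by
  let F : ℕ →o (Ideal (R ⧸ Ideal.span {a}))ᵒᵈ :=
    ⟨fun n => OrderDual.toDual ((J n).map (Ideal.Quotient.mk (Ideal.span {a}))),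
      fun i j hij => Ideal.map_mono (hJ hij)⟩
  obtain ⟨m, hm⟩ := IsArtinian.monotone_stabilizes F
  refine ⟨m, fun n hn u hu => ?_⟩
  have h1 : (J n).map (Ideal.Quotient.mk (Ideal.span {a})) =
      (J (n + 1)).map (Ideal.Quotient.mk (Ideal.span {a})) :=
    (hm n hn).symm.trans (hm (n + 1) (by omega))
  have h2 := Ideal.mem_map_of_mem (Ideal.Quotient.mk (Ideal.span {a})) hu
  rw [h1, Ideal.mem_map_iff_of_surjective _ Ideal.Quotient.mk_surjective] at h2
  obtain ⟨w, hw, hwu⟩ := h2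
  rw [eq_comm, Ideal.Quotient.eq, Ideal.mem_span_singleton] at hwu
  obtain ⟨c, hc⟩ := hwu
  exact ⟨w, hw, c, by linear_combination hc⟩

/-- If `A = a · 1` is a nonzerodivisor of `S`, every element of `S` is carried into `R` by a power
of `a`, and `R ⧸ (aⁿ)` is always Artinian, then `S ⧸ (A)` embeds in a quotient of `R ⧸ (aᵐ⁺¹)`
by multiplication with `aᵐ`, for `m` large. -/
lemma isArtinianRing_quotient (a : R) (hart : ∀ n, IsArtinianRing (R ⧸ Ideal.span {a ^ n}))
    (hA : algebraMap R S a ∈ S⁰)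
    (hs : ∀ s : S, ∃ (k : ℕ) (r : R), algebraMap R S a ^ k * s = algebraMap R S r) :
    IsArtinianRing (S ⧸ Ideal.span {algebraMap R S a}) := by
  set A := algebraMap R S a with hAdef
  let J : ℕ → Ideal R := fun n => (Ideal.span {A ^ n}).comap (algebraMap R S)
  have hJ : Antitone J := fun i j hij => Ideal.comap_mono <| by
    rw [Ideal.span_singleton_le_span_singleton]
    exact pow_dvd_pow _ hij
  have : IsArtinianRing (R ⧸ Ideal.span {a}) := pow_one a ▸ hart 1
  obtain ⟨m, hstep⟩ := exists_stable a J hJ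
  -- `a ^ m S ⊆ R + a ^ (m + 1) S`
  have hcov : ∀ (k : ℕ) (x : S) (u : R), A ^ k * (A ^ m * x) = algebraMap R S u →
      ∃ (v : S) (c : R), A ^ m * x = A ^ (m + 1) * v + algebraMap R S c := by
    intro k
    induction k with
    | zero => exact fun x u h => ⟨0, u, by simpa using h⟩
    | succ k ih =>
      intro x u h
      have hu : u ∈ J (m + (k + 1)) :=
        Ideal.mem_span_singleton.2 ⟨x, by rw [← h]; ring⟩
      obtain ⟨w, hw, c, rfl⟩ := hstep _ (by omega) u hu
      obtain ⟨v, hv⟩ := Ideal.mem_span_singleton.1 hw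
      -- modulo `aᵐ⁺¹ S`, `x` may be replaced by `x - a v`, which needs one power of `a` less
      have h3 : A ^ k * (A ^ m * (x - A * v)) = algebraMap R S c := by
        refine (mul_cancel_left_mem_nonZeroDivisors hA).1 ?_
        rw [map_add, map_mul, ← hAdef, hv] at h
        linear_combination h
      obtain ⟨v', c', h4⟩ := ih _ _ h3
      exact ⟨v + v', c', by linear_combination h4⟩
  have hartm := hart (m + 1)
  have : IsArtinian R (R ⧸ Ideal.span {a ^ (m + 1)}) :=
    isArtinian_of_surjective_algebraMap (R := R ⧸ Ideal.span {a ^ (m + 1)})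
      Ideal.Quotient.mk_surjective
  let g : R →ₗ[R] S ⧸ Ideal.span {A ^ (m + 1)} := Algebra.linearMap _ _
  have hgker : Ideal.span {a ^ (m + 1)} ≤ LinearMap.ker g := by
    rw [Ideal.span_singleton_le_iff_mem, LinearMap.mem_ker]
    change Ideal.Quotient.mk _ (algebraMap R S (a ^ (m + 1))) = 0
    rw [Ideal.Quotient.eq_zero_iff_mem, map_pow]
    exact Ideal.mem_span_singleton_self _
  have hgart : IsArtinian R (LinearMap.range g) := by
    rw [← Submodule.range_liftQ _ g hgker]
    exact isArtinian_of_surjective _ _ (LinearMap.surjective_rangeRestrict _)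
  let f : S →ₗ[R] S ⧸ Ideal.span {A ^ (m + 1)} :=
    (Ideal.Quotient.mkₐ R _).toLinearMap ∘ₗ LinearMap.mulLeft R (A ^ m)
  have hfg : LinearMap.range f ≤ LinearMap.range g := by
    rintro _ ⟨x, rfl⟩
    obtain ⟨k, u, hu⟩ := hs (A ^ m * x)
    obtain ⟨v, c, hvc⟩ := hcov k x u hu
    refine ⟨c, ?_⟩
    change Ideal.Quotient.mk _ (algebraMap R S c) = Ideal.Quotient.mk _ (A ^ m * x)
    rw [eq_comm, Ideal.Quotient.eq, Ideal.mem_span_singleton]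
    exact ⟨v, by linear_combination hvc⟩
  have hfart : IsArtinian R (LinearMap.range f) := isArtinian_of_le hfg
  have hqart : IsArtinian R (S ⧸ LinearMap.ker f) :=
    isArtinian_of_linearEquiv f.quotKerEquivRange.symm
  let q : S →ₗ[R] S ⧸ Ideal.span {A} := (Ideal.Quotient.mkₐ R _).toLinearMap
  have hq : LinearMap.ker f ≤ LinearMap.ker q := by
    intro x hx
    have hx' : Ideal.Quotient.mk (Ideal.span {A ^ (m + 1)}) (A ^ m * x) = 0 := hx
    rw [Ideal.Quotient.eq_zero_iff_mem, Ideal.mem_span_singleton] at hx'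
    obtain ⟨w, hw⟩ := hx'
    change Ideal.Quotient.mk (Ideal.span {A}) x = 0
    rw [Ideal.Quotient.eq_zero_iff_mem, Ideal.mem_span_singleton]
    refine ⟨w, (mul_cancel_left_mem_nonZeroDivisors (pow_mem hA m)).1 ?_⟩
    linear_combination hw
  have : IsArtinian R (S ⧸ Ideal.span {A}) := by
    refine isArtinian_of_surjective _ ((LinearMap.ker f).liftQ q hq) fun z => ?_
    obtain ⟨x, rfl⟩ := Ideal.Quotient.mk_surjective z
    exact ⟨Submodule.Quotient.mk x, rfl⟩
  exact isArtinian_of_tower R this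

end

/-- A maximal ideal `N` containing a nonzerodivisor `A` with `S ⧸ (A)` Artinian is principal as soon
as `S` is semilocal and `(A)` contains every `b` with `b N ⊆ A N`. -/
lemma isPrincipal_of_isArtinianRing {S : Type*} [CommRing S] (hsl : IsSemilocalRing S) {A : S}
    (hA : A ∈ S⁰) [IsArtinianRing (S ⧸ Ideal.span {A})] (N : Ideal S) [hN : N.IsMaximal]
    (hAN : A ∈ N)
    (hcl : ∀ b, (∀ t ∈ N, ∃ u ∈ N, b * t = A * u) → b ∈ Ideal.span {A}) :
    N.IsPrincipal := by
  set I := Ideal.span {A} with hI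
  have hIN : I ≤ N := (Ideal.span_singleton_le_iff_mem _).2 hAN
  have hmp : (N.map (Ideal.Quotient.mk I)).IsPrime :=
    Ideal.map_isPrime_of_surjective Ideal.Quotient.mk_surjective (by simpa using hIN)
  have hmem : ∀ t, Ideal.Quotient.mk I t ∈ N.map (Ideal.Quotient.mk I) ↔ t ∈ N := fun t => by
    rw [Ideal.mem_quotient_iff_mem hIN]
  -- in an Artinian ring every prime is minimal, hence an associated prime
  have hass : N.map (Ideal.Quotient.mk I) ∈ associatedPrimes (S ⧸ I) (S ⧸ I) := by
    refine Module.associatedPrimes.minimalPrimes_annihilator_subset_associatedPrimes _ _ ?_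
    rw [Ring.KrullDimLE.mem_minimalPrimes_iff]
    refine ⟨hmp, ?_⟩
    rw [Module.annihilator_eq_bot.2 inferInstance]
    exact bot_le
  obtain ⟨-, z, hz⟩ := isAssociatedPrime_iff.1 hass
  obtain ⟨b, rfl⟩ := Ideal.Quotient.mk_surjective z
  have hb : ∀ t, t ∈ N ↔ A ∣ b * t := fun t => by
    rw [← hmem, hz, Submodule.mem_colon_singleton, Submodule.mem_bot, smul_eq_mul, ← map_mul,
      Ideal.Quotient.eq_zero_iff_mem, hI, Ideal.mem_span_singleton, mul_comm]
  have hbA : b ∉ I := fun h => hN.ne_top <| (Ideal.eq_top_iff_one _).2 <| by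
    rw [hb, mul_one]
    exact Ideal.mem_span_singleton.1 h
  obtain ⟨n, hn, hnu⟩ : ∃ t ∈ N, ∀ u ∈ N, b * t ≠ A * u := by
    by_contra! h
    exact hbA (hcl b h)
  obtain ⟨s, hs⟩ := (hb n).1 hn
  have hsN : s ∉ N := fun h => hnu s h hs
  -- `J = (A : N)` is the inverse of `N` up to the factor `A`
  let J : Ideal S := Ideal.span {A, b}
  have hJN : N * J = Ideal.span {A} := by
    refine le_antisymm (Ideal.mul_le.2 fun t ht j hj => ?_) ?_
    · obtain ⟨x, y, rfl⟩ := Ideal.mem_span_pair.1 hj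
      obtain ⟨w, hw⟩ := (hb t).1 ht
      exact Ideal.mem_span_singleton.2 ⟨t * x + y * w, by linear_combination y * hw⟩
    · rw [Ideal.span_singleton_le_iff_mem]
      obtain ⟨y, hy⟩ := hN.exists_inv hsN
      obtain ⟨i, hi, hyi⟩ := hy
      have h1 : A = i * A + y * (n * b) := by linear_combination (-A) * hyi - y * hs
      rw [h1]
      exact add_mem (Ideal.mul_mem_mul hi (Ideal.subset_span (by simp)))
        (Ideal.mul_mem_left _ _ (Ideal.mul_mem_mul hn (Ideal.subset_span (by simp))))
  refine Ideal.IsPrincipal.of_finite_maximals_of_isUnit hsl ?_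
  refine isUnit_of_mul_isUnit_left (y := (J : FractionalIdeal S⁰ (FractionRing S))) ?_
  rw [← FractionalIdeal.coeIdeal_mul, hJN, FractionalIdeal.coeIdeal_span_singleton]
  have hu : IsUnit (algebraMap S (FractionRing S) A) := IsLocalization.map_units _ (⟨A, hA⟩ : S⁰)
  obtain ⟨w, hw⟩ := hu.exists_right_inv
  refine .of_mul_eq_one (FractionalIdeal.spanSingleton S⁰ w) ?_
  rw [FractionalIdeal.spanSingleton_mul_spanSingleton, hw, FractionalIdeal.spanSingleton_one]

/-! ### The integral closure of `R` in `R[1/a]` -/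

section
variable {R : Type*} [CommRing R] [IsLocalRing R] {a : R}

lemma isArtinianRing_quotient_pow (hfg : (maximalIdeal R).FG)
    (ha : maximalIdeal R = (Ideal.span {a}).radical) (n : ℕ) :
    IsArtinianRing (R ⧸ Ideal.span {a ^ n}) := by
  have hmax : ∀ p : Ideal (R ⧸ Ideal.span {a ^ n}), p.IsPrime →
      p.comap (Ideal.Quotient.mk _) = maximalIdeal R := by
    intro p hp
    have hp' := hp.comap (Ideal.Quotient.mk (Ideal.span {a ^ n}))
    refine le_antisymm (le_maximalIdeal hp'.ne_top) ?_
    rw [ha, hp'.radical_le_iff, Ideal.span_singleton_le_iff_mem]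
    refine hp'.mem_of_pow_mem n ?_
    rw [Ideal.mem_comap, Ideal.Quotient.eq_zero_iff_mem.2 (Ideal.mem_span_singleton_self _)]
    exact zero_mem _
  have : IsNoetherianRing (R ⧸ Ideal.span {a ^ n}) := .of_prime fun p hp => by
    rw [← Ideal.map_comap_of_surjective _ Ideal.Quotient.mk_surjective p, hmax p hp]
    exact hfg.map _
  have : Ring.KrullDimLE 0 (R ⧸ Ideal.span {a ^ n}) := Ring.krullDimLE_zero_iff.mpr fun p hp => by
    rw [← Ideal.map_comap_of_surjective _ Ideal.Quotient.mk_surjective p]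
    refine (Ideal.map_eq_top_or_isMaximal_of_surjective _ Ideal.Quotient.mk_surjective
      (hmax p hp ▸ maximalIdeal.isMaximal R)).resolve_left ?_
    rw [Ideal.map_comap_of_surjective _ Ideal.Quotient.mk_surjective p]
    exact hp.ne_top
  exact IsNoetherianRing.isArtinianRing_of_krullDimLE_zero

variable {S T : Type*} [CommRing S] [CommRing T] [Algebra R S] [Algebra R T] [Algebra S T]
  [IsScalarTower R S T] [IsIntegralClosure S R T]

lemma algebraMap_mem_nonZeroDivisors (R T : Type*) {S : Type*} [CommRing R] [CommRing S]
    [CommRing T] [Algebra R S] [Algebra R T] [Algebra S T] [IsScalarTower R S T]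
    [IsIntegralClosure S R T] {a : R} (hu : IsUnit (algebraMap R T a)) :
    algebraMap R S a ∈ S⁰ := by
  refine mem_nonZeroDivisors_of_injective (IsIntegralClosure.algebraMap_injective S R T) ?_
  rw [← IsScalarTower.algebraMap_apply R S T]
  exact hu.mem_nonZeroDivisors

/-- The hypotheses on `T` say that `T` is generated over the image of `R` by the inverse of `a`;
`S` is the integral closure of `R` in `T`. -/
lemma integralClosure_semilocal_principal (hfg : (maximalIdeal R).FG)
    (ha : maximalIdeal R = (Ideal.span {a}).radical) (hu : IsUnit (algebraMap R T a))
    (hT : ∀ t : T, ∃ (k : ℕ) (r : R), algebraMap R T a ^ k * t = algebraMap R T r) :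
    IsSemilocalRing S ∧ ∀ N : Ideal S, N.IsMaximal → N.IsPrincipal := by
  have h_integral : Algebra.IsIntegral R S := IsIntegralClosure.isIntegral_algebra R T
  have hinj := IsIntegralClosure.algebraMap_injective S R T
  have hA : algebraMap R S a ∈ S⁰ := algebraMap_mem_nonZeroDivisors R T hu
  have haM : a ∈ maximalIdeal R := ha ▸ Ideal.le_radical (Ideal.mem_span_singleton_self a)
  have hAN : ∀ N : Ideal S, N.IsMaximal → algebraMap R S a ∈ N := fun N hN => by
    rw [← comap_isMaximal (R := R) N] at haM
    exact haM
  have hart : IsArtinianRing (S ⧸ Ideal.span {algebraMap R S a}) := by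
    refine isArtinianRing_quotient a (isArtinianRing_quotient_pow hfg ha) hA fun s => ?_
    obtain ⟨k, r, h⟩ := hT (algebraMap S T s)
    refine ⟨k, r, hinj ?_⟩
    rw [map_mul, map_pow, ← IsScalarTower.algebraMap_apply, ← IsScalarTower.algebraMap_apply, h]
  have hsl : IsSemilocalRing S := by
    have hfin := IsArtinianRing.setOfPred_isPrime_finite (S ⧸ Ideal.span {algebraMap R S a})
    refine (hfin.image (Ideal.comap (Ideal.Quotient.mk _))).subset fun N (hN : N.IsMaximal) => ?_
    have hIN : Ideal.span {algebraMap R S a} ≤ N :=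
      (Ideal.span_singleton_le_iff_mem _).2 (hAN N hN)
    refine ⟨N.map (Ideal.Quotient.mk _), ?_, ?_⟩
    · exact Ideal.map_isPrime_of_surjective Ideal.Quotient.mk_surjective (by simpa using hIN)
    · rw [Ideal.comap_map_of_surjective' _ Ideal.Quotient.mk_surjective]
      simpa using hIN
  refine ⟨hsl, fun N hN => isPrincipal_of_isArtinianRing hsl hA N (hAN N hN) fun b hb => ?_⟩
  have hNfg : N.FG := by
    refine Ideal.fg_of_fg_map_of_fg_inf_ker_of_surjective
      (f := Ideal.Quotient.mk (Ideal.span {algebraMap R S a})) (IsNoetherian.noetherian _) ?_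
      Ideal.Quotient.mk_surjective
    rw [Ideal.mk_ker, inf_eq_right.2 ((Ideal.span_singleton_le_iff_mem _).2 (hAN N hN))]
    exact ⟨{algebraMap R S a}, by simp⟩
  obtain ⟨w, hw⟩ := hu.exists_right_inv
  -- `w b = b / a` multiplies the image of `N`, which contains the unit `a`, into itself
  have hx : IsIntegral S (w * algebraMap S T b) := by
    refine isIntegral_of_mul_mem (Submodule.map (Algebra.linearMap S T) N)
      (Submodule.FG.map _ hNfg) hu
      (Submodule.mem_map.2
        ⟨algebraMap R S a, hAN N hN, (IsScalarTower.algebraMap_apply R S T a).symm⟩) _ ?_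
    rintro _ ⟨t, ht, rfl⟩
    obtain ⟨u, huN, hbt⟩ := hb t ht
    refine ⟨u, huN, ?_⟩
    have h1 := congrArg (algebraMap S T) hbt
    rw [map_mul, map_mul, ← IsScalarTower.algebraMap_apply] at h1
    change algebraMap S T u = w * algebraMap S T b * algebraMap S T t
    linear_combination (-w) * h1 - algebraMap S T u * hw
  have hx' : IsIntegral R (w * algebraMap S T b) := isIntegral_trans _ hx
  obtain ⟨c, hc⟩ := (IsIntegralClosure.isIntegral_iff (A := S)).1 hx'
  refine Ideal.mem_span_singleton.2 ⟨c, hinj ?_⟩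
  rw [map_mul, ← IsScalarTower.algebraMap_apply, hc]
  linear_combination (-algebraMap S T b) * hw

variable (S) in
include S in
/-- Since `T = S[1/a]`, a maximal ideal of `T` contracts to a nonmaximal prime of `S`, which lies in
some `⋂ₖ (y_Nᵏ)`; the extension of that prime to `T` is proper, hence equal to the given ideal. -/
lemma isSemilocalRing_of_unit_pow (hfg : (maximalIdeal R).FG)
    (ha : maximalIdeal R = (Ideal.span {a}).radical) (hu : IsUnit (algebraMap R T a))
    (hT : ∀ t : T, ∃ (k : ℕ) (r : R), algebraMap R T a ^ k * t = algebraMap R T r) :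
    IsSemilocalRing T := by
  obtain ⟨hsl, hprin⟩ := integralClosure_semilocal_principal (S := S) hfg ha hu hT
  have h_integral : Algebra.IsIntegral R S := IsIntegralClosure.isIntegral_algebra R T
  have hinj := IsIntegralClosure.algebraMap_injective S R T
  have hA : algebraMap R S a ∈ S⁰ := algebraMap_mem_nonZeroDivisors R T hu
  have haM : a ∈ maximalIdeal R := ha ▸ Ideal.le_radical (Ideal.mem_span_singleton_self a)
  choose! y hyreg hy using exists_regular_generator haM hA hprin
  have hloc : IsLocalization.Away (algebraMap R S a) T := by
    refine .mk _ ?_ (fun t => ?_) fun b c h => ⟨0, by rw [hinj h]⟩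
    · rwa [← IsScalarTower.algebraMap_apply]
    · obtain ⟨k, r, h⟩ := hT t
      refine ⟨k, algebraMap R S r, ?_⟩
      rw [← IsScalarTower.algebraMap_apply, ← IsScalarTower.algebraMap_apply, mul_comm, h]
  refine (Set.Finite.image (fun N : Ideal S => (powInf (y N)).map (algebraMap S T)) hsl).subset
    fun K (hK : K.IsMaximal) => ?_
  have hQ : (K.comap (algebraMap S T)).IsPrime := hK.isPrime.comap _
  have hQmax : ¬ (K.comap (algebraMap S T)).IsMaximal := fun h => by
    have := comap_isMaximal (R := R) (K.comap (algebraMap S T))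
    rw [← this, Ideal.mem_comap, Ideal.mem_comap, ← IsScalarTower.algebraMap_apply] at haM
    exact hK.ne_top (Ideal.eq_top_of_isUnit_mem _ haM hu)
  obtain ⟨N, hN, hQN⟩ := Ideal.exists_le_maximal _ hQ.ne_top
  refine ⟨N, hN, ?_⟩
  have hNy := hy N hN
  have hprime : (powInf (y N)).IsPrime := powInf_isPrime (hyreg N hN) (hNy ▸ hN.isPrime)
  have hle := le_powInf (hNy ▸ hN) (hNy ▸ hQN) hQmax
  have hKle : K ≤ (powInf (y N)).map (algebraMap S T) := by
    rw [← IsLocalization.map_under (Submonoid.powers (algebraMap R S a)) T K]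
    exact Ideal.map_mono hle
  refine (hK.eq_of_le ?_ hKle).symm
  rw [IsLocalization.map_algebraMap_ne_top_iff_disjoint (Submonoid.powers (algebraMap R S a)),
    Set.disjoint_left]
  rintro _ ⟨n, rfl⟩ hn
  have h1 : a ∈ (powInf (y N)).comap (algebraMap R S) := hprime.mem_of_pow_mem n hn
  have hmax : (powInf (y N)).IsMaximal := by
    refine isMaximal_of_maximalIdeal_le (R := R) _ ?_
    rwa [ha, (hprime.comap (algebraMap R S)).radical_le_iff, Ideal.span_singleton_le_iff_mem]
  have h2 := hmax.eq_of_le (hNy ▸ hN.ne_top) (powInf_le (y N))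
  exact powInf_ne (hyreg N hN) (hNy ▸ hN.isPrime) h2

end

/-! ### The Nagata transform -/

section
variable {R : Type*} [CommRing R]

/-- The union defining the Nagata transform is already closed under the ring operations, so `x` lies
in `T(I)` exactly when `x Iᵏ ⊆ R` for some `k`; allowing `k = 0` adds nothing, since
`I⁰ = R ⊇ I`. -/
lemma mem_nagataTransform_iff {I : Ideal R} {x : Localization R⁰} :
    x ∈ nagataTransform R I ↔
      ∃ k : ℕ, ∀ m ∈ I ^ k, ∃ r : R, algebraMap R _ r = x * algebraMap R _ m := by
  constructor
  · intro hx
    refine Algebra.adjoin_induction (p := fun x _ => ∃ k : ℕ, ∀ m ∈ I ^ k, ∃ r : R,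
      algebraMap R (Localization R⁰) r = x * algebraMap R _ m) ?_ ?_ ?_ ?_ hx
    · intro x hx
      obtain ⟨k, hk⟩ := Set.mem_iUnion.1 hx
      refine ⟨k + 1, fun m hm => ?_⟩
      exact Submodule.mem_one.1 (Submodule.mem_div_iff_forall_mul_mem.1 hk _
        ((IsLocalization.mem_coeSubmodule _ _).2 ⟨m, hm, rfl⟩))
    · exact fun r => ⟨0, fun m _ => ⟨r * m, map_mul _ _ _⟩⟩
    · rintro x y - - ⟨k, hk⟩ ⟨l, hl⟩
      refine ⟨k + l, fun m hm => ?_⟩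
      obtain ⟨r, hr⟩ := hk m (Ideal.pow_le_pow_right (by omega) hm)
      obtain ⟨s, hs⟩ := hl m (Ideal.pow_le_pow_right (by omega) hm)
      exact ⟨r + s, by rw [map_add, hr, hs, add_mul]⟩
    · rintro x y - - ⟨k, hk⟩ ⟨l, hl⟩
      refine ⟨k + l, fun m hm => ?_⟩
      rw [pow_add] at hm
      refine Submodule.mul_induction_on hm (fun u hu v hv => ?_) ?_
      · obtain ⟨r, hr⟩ := hk u hu
        obtain ⟨s, hs⟩ := hl v hv
        exact ⟨r * s, by rw [map_mul, hr, hs, map_mul]; ring⟩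
      · rintro u v ⟨r, hr⟩ ⟨s, hs⟩
        exact ⟨r + s, by rw [map_add, hr, hs, map_add, mul_add]⟩
  · rintro ⟨k, hk⟩
    refine Algebra.subset_adjoin (Set.mem_iUnion.2 ⟨k, ?_⟩)
    refine Submodule.mem_div_iff_forall_mul_mem.2 fun y hy => ?_
    obtain ⟨m, hm, rfl⟩ := (IsLocalization.mem_coeSubmodule _ _).1 hy
    exact Submodule.mem_one.2 (hk m (Ideal.pow_le_pow_right (by omega) hm))

lemma mem_nonZeroDivisors_of_radical {M : Ideal R} (hreg : ∃ r ∈ M, r ∈ R⁰) {a : R}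
    (ha : M = (Ideal.span {a}).radical) : a ∈ R⁰ := by
  obtain ⟨r, hrM, hr⟩ := hreg
  rw [ha] at hrM
  obtain ⟨n, hn⟩ := hrM
  obtain ⟨c, hc⟩ := Ideal.mem_span_singleton.1 hn
  have := pow_mem hr n
  rw [hc] at this
  exact (mul_mem_nonZeroDivisors.1 this).1

lemma isUnit_nagataTransform {M : Ideal R} (hfg : M.FG) {a : R} (haR : a ∈ R⁰)
    (ha : M = (Ideal.span {a}).radical) : IsUnit (algebraMap R (nagataTransform R M) a) := by
  obtain ⟨n, hn⟩ := Ideal.exists_pow_le_of_le_radical_of_fg ha.le hfg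
  have hu : IsUnit (algebraMap R (Localization R⁰) a) := IsLocalization.map_units _ (⟨a, haR⟩ : R⁰)
  obtain ⟨w, hw⟩ := hu.exists_right_inv
  have hwT : w ∈ nagataTransform R M := mem_nagataTransform_iff.2 ⟨n, fun m hm => by
    obtain ⟨c, rfl⟩ := Ideal.mem_span_singleton.1 (hn hm)
    exact ⟨c, by rw [map_mul]; linear_combination (-algebraMap R (Localization R⁰) c) * hw⟩⟩
  exact .of_mul_eq_one ⟨w, hwT⟩ (Subtype.ext hw)

lemma exists_pow_mul_eq {M : Ideal R} {a : R} (haM : a ∈ M) (t : nagataTransform R M) :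
    ∃ (k : ℕ) (r : R), algebraMap R (nagataTransform R M) a ^ k * t = algebraMap R _ r := by
  obtain ⟨k, hk⟩ := mem_nagataTransform_iff.1 t.2
  obtain ⟨r, hr⟩ := hk (a ^ k) (Ideal.pow_mem_pow haM k)
  refine ⟨k, r, Subtype.ext ?_⟩
  rw [← map_pow, mul_comm]
  exact hr.symm

end

/-- By prime avoidance some `a ∈ M` is a unit of `T(M)`, and `a⁻¹ Mᵏ ⊆ R` means `Mᵏ ⊆ (a)`. -/
lemma exists_radical_of_nagataTransform {R : Type*} [CommRing R] [IsLocalRing R]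
    (hsl : IsSemilocalRing (nagataTransform R (maximalIdeal R)))
    (htop : (maximalIdeal R).map (algebraMap R (nagataTransform R (maximalIdeal R))) = ⊤) :
    ∃ a : R, maximalIdeal R = (Ideal.span {a}).radical := by
  have hnot : ¬ ((maximalIdeal R : Set R) ⊆
      ⋃ K ∈ {I : Ideal (nagataTransform R (maximalIdeal R)) | I.IsMaximal},
        (K.comap (algebraMap R (nagataTransform R (maximalIdeal R))) : Ideal R)) := by
    rw [Ideal.subset_union_prime_finite hsl
      (f := fun K => K.comap (algebraMap R (nagataTransform R (maximalIdeal R)))) ⊤ ⊤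
      (fun K hK _ _ => Ideal.IsPrime.comap _ (hK := Ideal.IsMaximal.isPrime hK))]
    rintro ⟨K, hK, hle⟩
    exact hK.ne_top (top_le_iff.1 (htop ▸ Ideal.map_le_iff_le_comap.2 hle))
  obtain ⟨a, haM, ha⟩ := Set.not_subset.1 hnot
  have hu : IsUnit (algebraMap R (nagataTransform R (maximalIdeal R)) a) := by
    by_contra hnu
    obtain ⟨K, hK, haK⟩ := exists_max_ideal_of_mem_nonunits hnu
    exact ha (Set.mem_biUnion (x := K) hK haK)
  obtain ⟨w, hw⟩ := hu.exists_right_inv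
  obtain ⟨k, hk⟩ := mem_nagataTransform_iff.1 w.2
  refine ⟨a, le_antisymm ?_ ?_⟩
  · intro m hm
    refine ⟨k, ?_⟩
    obtain ⟨r, hr⟩ := hk (m ^ k) (Ideal.pow_mem_pow hm k)
    have hw' : algebraMap R (Localization R⁰) a * w = 1 := congrArg Subtype.val hw
    refine Ideal.mem_span_singleton.2 ⟨r, IsLocalization.injective (Localization R⁰) le_rfl ?_⟩
    rw [map_mul, hr]
    linear_combination (-algebraMap R (Localization R⁰) (m ^ k)) * hw'
  · rw [(maximalIdeal.isMaximal R).isPrime.radical_le_iff]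
    exact (Ideal.span_singleton_le_iff_mem _).2 haM

/-- Let `R` be a local ring with finitely generated regular maximal ideal `M`, and let `R'`
be the integral closure of `R` in `T(M)`.  The following are equivalent: (1) `M` is the
radical of a principal ideal; (2) `R'` is a semilocal ring whose maximal ideals are
principal; (3) some integral overring of `R` has all maximal ideals principal;
(4) `T(M)` is semilocal and `M·T(M) = T(M)`. -/
theorem pre_stable_semilocal {R : Type*} [CommRing R] [IsLocalRing R]
    (hfg : (IsLocalRing.maximalIdeal R).FG)
    (hreg : ∃ r ∈ IsLocalRing.maximalIdeal R, r ∈ R⁰) :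
    List.TFAE
      [∃ a : R, IsLocalRing.maximalIdeal R = (Ideal.span {a}).radical,
       IsSemilocalRing
           (integralClosure R (nagataTransform R (IsLocalRing.maximalIdeal R))) ∧
         ∀ N : Ideal (integralClosure R (nagataTransform R (IsLocalRing.maximalIdeal R))),
           N.IsMaximal → N.IsPrincipal,
       ∃ S : Subalgebra R (Localization R⁰), Algebra.IsIntegral R S ∧
         ∀ N : Ideal S, N.IsMaximal → N.IsPrincipal,
       IsSemilocalRing (nagataTransform R (IsLocalRing.maximalIdeal R)) ∧
         (IsLocalRing.maximalIdeal R).map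
           (algebraMap R (nagataTransform R (IsLocalRing.maximalIdeal R))) = ⊤] := by
  tfae_have 1 → 2 := by
    rintro ⟨a, ha⟩
    have haR := mem_nonZeroDivisors_of_radical hreg ha
    have haM : a ∈ maximalIdeal R := ha ▸ Ideal.le_radical (Ideal.mem_span_singleton_self a)
    exact integralClosure_semilocal_principal
      (T := nagataTransform R (maximalIdeal R)) hfg ha
      (isUnit_nagataTransform hfg haR ha) (exists_pow_mul_eq haM)
  tfae_have 1 → 4 := by
    rintro ⟨a, ha⟩
    have haR := mem_nonZeroDivisors_of_radical hreg ha
    have haM : a ∈ maximalIdeal R := ha ▸ Ideal.le_radical (Ideal.mem_span_singleton_self a)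
    have hu := isUnit_nagataTransform hfg haR ha
    refine ⟨isSemilocalRing_of_unit_pow
      (S := integralClosure R (nagataTransform R (maximalIdeal R))) hfg ha hu
      (exists_pow_mul_eq haM), ?_⟩
    exact Ideal.eq_top_of_isUnit_mem _ (Ideal.mem_map_of_mem _ haM) hu
  tfae_have 4 → 1 := fun ⟨hsl, htop⟩ => exists_radical_of_nagataTransform hsl htop
  tfae_have 2 → 3 := by
    rintro ⟨-, hprin⟩
    -- the copy of `R'` inside `Q(R)`
    let e := (integralClosure R (nagataTransform R (maximalIdeal R))).equivMapOfInjective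
      (nagataTransform R (maximalIdeal R)).val Subtype.val_injective
    refine ⟨(integralClosure R (nagataTransform R (maximalIdeal R))).map
      (nagataTransform R (maximalIdeal R)).val, ?_, fun N hN => ?_⟩
    · refine ⟨fun z => ?_⟩
      obtain ⟨x, rfl⟩ := e.surjective z
      exact (Algebra.IsIntegral.isIntegral (R := R) x).map e
    obtain ⟨y, hy⟩ := hprin (N.comap e) (Ideal.comap_isMaximal_of_surjective e e.surjective)
    refine ⟨e y, ?_⟩
    rw [← Ideal.map_comap_of_surjective e e.surjective N, hy]
    exact (Ideal.map_span e {y}).trans (by simp)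
  tfae_have 3 → 1 := by
    rintro ⟨S, hS, hprin⟩
    obtain ⟨r, hrM, hr⟩ := hreg
    have hu : IsUnit (algebraMap R (Localization R⁰) r) :=
      IsLocalization.map_units _ (⟨r, hr⟩ : R⁰)
    refine exists_radical_of_forall_isPrincipal (S := S) ?_ hrM ?_ hprin
    · refine .of_comp (f := S.val) ?_
      exact IsLocalization.injective (Localization R⁰) le_rfl
    · exact mem_nonZeroDivisors_of_injective (f := S.val) Subtype.val_injective
        hu.mem_nonZeroDivisors
  tfae_finish
end

section
/- Let R be a generalized local ring such that the number of minimal prime ideals of R equals the number of minimal prime ideals of the M-adic completion R̂ (both finite or equal as cardinals). Then the maximal ideal of R is the radical of a principal ideal if and only if the reduced quotient R_red is a Noetherian ring of Krull dimension at most 1. -/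
/-!
Write `M` for the maximal ideal of `R` and `S` for the `M`-adic completion.

If `R_red` is Noetherian of dimension at most one, then `R` has finitely many minimal primes and
every other prime is `M`. By prime avoidance some `a ∈ M` lies in no minimal prime other than `M`,
and `M` is the radical of `(a)`; if `M` itself is minimal, take `a = 0`.

Conversely let `M = √(a)`. As `M` is finitely generated, the `a`-adic and `M`-adic topologies agree,
`S` is local with maximal ideal `MS = √(aS)`, and `S` is Noetherian: by Cohen's theorem it is
enough to bound a prime `P` with `a ∉ P`; there `P ∩ aS = aP`, so `P / aP` embeds in the Noetherian
ring `S / aS`, and completeness lifts generators from `P / aP` to `P`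
(`isNoetherianRing_of_isAdicComplete`). By Krull's principal ideal theorem, the primes of `S` not
containing `a` are minimal.

Since `R` embeds in `S`, each minimal prime of `R` is contracted from a minimal prime of `S`. There
are finitely many of the latter, so equality of the two counts forces every minimal prime of `S` to
contract to a minimal prime of `R`. If a prime `q ≠ M` of `R` were not minimal, it would contain
some `x` outside all minimal primes of `R`. Then `x` is in no minimal prime of `S`, hence some power
`a ^ k` lies in `xS`; since ideals containing a power of `M` are closed,
`a ^ k ∈ xR + a ^ (k + 1) R`, and so `a ^ k ∈ xR ⊆ q`, a contradiction. Thus every prime of `R` is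
minimal or equal to `M`. By Cohen's theorem each `R / p` with `p` minimal is Noetherian, and `R_red`
embeds in the finite product of these `R`-modules.
-/

open IsLocalRing

theorem isPrecomplete_fin_fun {S : Type*} [CommRing S] (m : Ideal S) [IsPrecomplete m S]
    (n : ℕ) : IsPrecomplete m (Fin n → S) := by
  rw [← AdicCompletion.of_surjective_iff]
  intro x
  choose y hy using fun i => AdicCompletion.of_surjective m S (AdicCompletion.piEquivFin m n x i)
  refine ⟨y, (AdicCompletion.piEquivFin m n).injective ?_⟩
  funext i
  rw [← hy i, AdicCompletion.piEquivFin_apply]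
  simp only [AdicCompletion.pi, LinearMap.pi_apply]
  rw [AdicCompletion.map_of]
  rfl

theorem isHausdorff_ideal {S : Type*} [CommRing S] (m : Ideal S) [IsHausdorff m S]
    (P : Ideal S) : IsHausdorff m P := by
  refine ⟨fun x hx => Subtype.ext (IsHausdorff.haus ‹IsHausdorff m S› _ fun n => ?_)⟩
  have := hx n
  rw [SModEq.zero] at this ⊢
  have h2 := Submodule.mem_map_of_mem (f := P.subtype) this
  rw [Submodule.map_smul''] at h2
  exact (smul_mono_right (m ^ n) le_top : m ^ n • Submodule.map P.subtype ⊤ ≤ m ^ n • ⊤) h2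

/-- A form of Nakayama's lemma over an `m`-adically complete ring: unlike the usual one, it does not
assume that `P` is finitely generated, but concludes it. -/
theorem fg_of_le_sup_smul {S : Type*} [CommRing S] (m : Ideal S) [IsAdicComplete m S]
    (P N : Ideal S) (hN : N.FG) (hNP : N ≤ P) (h : P ≤ N ⊔ m • P) : P.FG := by
  have := isHausdorff_ideal m P
  obtain ⟨n, x, hx⟩ := Submodule.fg_iff_exists_fin_generating_family.mp hN
  have hxP : ∀ i, x i ∈ P := fun i => hNP (hx ▸ Submodule.subset_span ⟨i, rfl⟩)
  have := isPrecomplete_fin_fun m n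
  let f : (Fin n → S) →ₗ[S] P := Fintype.linearCombination S (fun i => (⟨x i, hxP i⟩ : P))
  have hf : Function.Surjective f := by
    apply surjective_of_mkQ_comp_surjective (I := m)
    rw [← LinearMap.range_eq_top, LinearMap.range_comp, Fintype.range_linearCombination]
    rw [Submodule.map_mkQ_eq_top]
    rw [eq_top_iff, ← Submodule.map_le_map_iff_of_injective (f := P.subtype) P.subtype_injective,
      Submodule.map_sup, Submodule.map_smul'', Submodule.map_span, ← Set.range_comp]
    simp only [Submodule.map_top, Submodule.range_subtype]
    have : (⇑P.subtype ∘ fun i => (⟨x i, hxP i⟩ : P)) = x := rfl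
    rw [this, hx, sup_comm]
    exact h
  exact Module.Finite.iff_fg.mp (Module.Finite.of_surjective f hf)

/-- The only prime of `S ⧸ I` is the image of `m`, so Cohen's theorem applies. -/
theorem isNoetherianRing_quotient_of_le_radical {S : Type*} [CommRing S] (m : Ideal S)
    [m.IsMaximal] (hm : m.FG) (I : Ideal S) (hI : m ≤ I.radical) :
    IsNoetherianRing (S ⧸ I) := by
  refine IsNoetherianRing.of_prime fun Q hQ => ?_
  have hle : m ≤ Q.comap (Ideal.Quotient.mk I) := by
    refine hI.trans ((hQ.comap _).radical_le_iff.mpr ?_)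
    rw [← Ideal.map_le_iff_le_comap, Ideal.map_quotient_self]
    exact bot_le
  have heq := Ideal.IsMaximal.eq_of_le ‹_› (hQ.comap (Ideal.Quotient.mk I)).ne_top hle
  rw [← Ideal.map_comap_of_surjective _ Ideal.Quotient.mk_surjective Q, ← heq]
  exact hm.map _

/-- By Cohen's theorem: a prime `P` not containing `a` satisfies `P ∩ (a) = a P`, so generators of
the image of `P` in the Noetherian ring `S ⧸ (a)` generate `P` modulo `a P`. -/
theorem isNoetherianRing_of_isAdicComplete {S : Type*} [CommRing S] (m : Ideal S)
    [m.IsMaximal] [IsAdicComplete m S] (hm : m.FG) (a : S) (ham : a ∈ m)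
    (ha : m ≤ (Ideal.span {a}).radical) : IsNoetherianRing S := by
  have := isNoetherianRing_quotient_of_le_radical m hm _ ha
  refine IsNoetherianRing.of_prime fun P hP => ?_
  by_cases haP : a ∈ P
  · have : m ≤ P := ha.trans (hP.radical_le_iff.mpr (by simpa [Ideal.span_le] using haP))
    rwa [← Ideal.IsMaximal.eq_of_le ‹m.IsMaximal› hP.ne_top this]
  · obtain ⟨N, hNP, hN, hmap⟩ : ∃ N ≤ P, N.FG ∧
        N.map (Ideal.Quotient.mk (Ideal.span {a})) = P.map (Ideal.Quotient.mk (Ideal.span {a})) := by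
      classical
      obtain ⟨t, ht, hts⟩ := Submodule.fg_span_iff_fg_span_finset_subset
        ((Ideal.Quotient.mk (Ideal.span {a})) '' (P : Set S)) |>.mp
        (IsNoetherian.noetherian (P.map (Ideal.Quotient.mk (Ideal.span {a}))))
      obtain ⟨u, hu, hut⟩ := Finset.subset_set_image_iff.mp ht
      refine ⟨Ideal.span u, Ideal.span_le.mpr hu, ⟨u, rfl⟩, ?_⟩
      rw [Ideal.map_span, Ideal.map]
      refine Eq.trans ?_ hts.symm
      rw [← hut, Finset.coe_image, Ideal.submodule_span_eq]
    refine fg_of_le_sup_smul m P N hN hNP fun p hp => ?_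
    have h1 := Ideal.mem_map_of_mem (Ideal.Quotient.mk (Ideal.span {a})) hp
    rw [← hmap, Ideal.mem_map_iff_of_surjective _ Ideal.Quotient.mk_surjective] at h1
    obtain ⟨q, hq, hqp⟩ := h1
    rw [Ideal.Quotient.eq, Ideal.mem_span_singleton] at hqp
    obtain ⟨c, hc⟩ := hqp
    have hcP : c ∈ P := (hP.mem_or_mem (hc ▸ P.sub_mem (hNP hq) hp)).resolve_left haP
    have : p = q + a * (-c) := by linear_combination -hc
    rw [this]
    exact Submodule.add_mem_sup hq (Submodule.smul_mem_smul ham (P.neg_mem hcP))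

/-- By Krull's principal ideal theorem the maximal ideal has height at most one. -/
theorem mem_minimalPrimes_of_notMem {S : Type*} [CommRing S] [IsLocalRing S] [IsNoetherianRing S]
    (a : S) (ha : maximalIdeal S = (Ideal.span {a}).radical) (Q : Ideal S) [hQ : Q.IsPrime]
    (haQ : a ∉ Q) : Q ∈ minimalPrimes S := by
  have hmin : maximalIdeal S ∈ (Ideal.span {a}).minimalPrimes := by
    refine ⟨⟨inferInstance, ha ▸ Ideal.le_radical⟩, fun J hJ _ => ?_⟩
    rw [ha]
    exact hJ.1.radical_le_iff.mpr hJ.2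
  have hlt : Q < maximalIdeal S := lt_of_le_of_ne (le_maximalIdeal hQ.ne_top) fun h =>
    haQ (h ▸ ha ▸ Ideal.le_radical (Ideal.mem_span_singleton_self a))
  have h1 := Ideal.height_le_one_of_isPrincipal_of_mem_minimalPrimes _ _ hmin
  have h2 := Ideal.height_strict_mono_of_isPrime hlt
  exact Ideal.height_eq_zero_iff.mp (Order.lt_one_iff.mp (h2.trans_le h1))

/-- `R ⧸ nilradical R` embeds, as an `R`-module, in the finite product of the `R ⧸ p`. -/
theorem isNoetherian_quotient_nilradical {R : Type*} [CommRing R] (hfin : (minimalPrimes R).Finite)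
    (h : ∀ p ∈ minimalPrimes R, IsNoetherianRing (R ⧸ p)) :
    IsNoetherianRing (R ⧸ nilradical R) := by
  have := hfin.to_subtype
  have hN : ∀ p : minimalPrimes R, IsNoetherian R (R ⧸ p.1) := fun p => by
    have := h p.1 p.2
    -- The identity, semilinear along `R → R ⧸ p`, transfers the Noetherian property.
    let l : (R ⧸ p.1) →ₛₗ[Ideal.Quotient.mk p.1] (R ⧸ p.1) :=
      { toFun := id, map_add' := fun _ _ => rfl, map_smul' := fun r x => by
          simp [Algebra.smul_def] }
    exact (LinearMap.isNoetherian_iff_of_bijective l Function.bijective_id).mpr this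
  let f : R →ₗ[R] (∀ p : minimalPrimes R, R ⧸ p.1) := LinearMap.pi fun p => p.1.mkQ
  have hker : f.ker = nilradical R := by
    ext x
    rw [nilradical, ← Ideal.sInf_minimalPrimes]
    simp only [f, LinearMap.mem_ker, funext_iff, LinearMap.pi_apply, Submodule.mkQ_apply,
      Pi.zero_apply, Submodule.Quotient.mk_eq_zero, Ideal.mem_sInf]
    exact ⟨fun h p hp => h ⟨p, hp⟩, fun h p => h p.2⟩
  have : IsNoetherian R (R ⧸ f.ker) := isNoetherian_of_linearEquiv f.quotKerEquivRange.symm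
  rw [hker] at this
  exact isNoetherian_of_tower R this

theorem exists_maximalIdeal_eq_radical_span {R : Type*} [CommRing R] [IsLocalRing R]
    (h : (IsNoetherianRing (R ⧸ nilradical R) ∧ ringKrullDim (R ⧸ nilradical R) ≤ 1)) :
    ∃ a : R, IsLocalRing.maximalIdeal R = (Ideal.span {a}).radical := by
  obtain ⟨h1, h2⟩ := h
  have hfin : (minimalPrimes R).Finite := by
    have := (minimalPrimes.finite_of_isNoetherianRing (R ⧸ nilradical R)).image (Ideal.comap (Ideal.Quotient.mk (nilradical R)))
    rwa [← Ideal.minimalPrimes_eq_comap, nilradical, Ideal.radical_minimalPrimes] at this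
  have hdim : Ring.KrullDimLE 1 R := by
    rw [Ring.krullDimLE_iff]
    rw [ringKrullDim_quotient, PrimeSpectrum.zeroLocus_nilradical,
      Order.krullDim_eq_of_orderIso OrderIso.Set.univ] at h2
    exact h2
  rw [Ring.krullDimLE_one_iff] at hdim
  by_cases hM : maximalIdeal R ∈ minimalPrimes R
  · refine ⟨0, le_antisymm ?_ ?_⟩
    · intro x hx
      rw [Ideal.radical_eq_sInf, Ideal.mem_sInf]
      rintro J ⟨-, hJ⟩
      exact hM.2 ⟨hJ, bot_le⟩ (le_maximalIdeal hJ.ne_top) hx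
    · refine (Ideal.IsPrime.radical_le_iff inferInstance).mpr (by simp)
  · have h3 : ¬ ((maximalIdeal R : Set R) ⊆ ⋃ p ∈ minimalPrimes R, (p : Set R)) := by
      refine (Ideal.subset_union_prime_finite hfin (f := id) ⊥ ⊥ fun p hp _ _ => hp.1.1).not.mpr ?_
      rintro ⟨p, hp, hle⟩
      have := hp.1.1
      exact hM (le_antisymm hle (le_maximalIdeal hp.1.1.ne_top) ▸ hp)
    obtain ⟨a, ha, ha'⟩ := Set.not_subset.mp h3
    refine ⟨a, le_antisymm ?_ ?_⟩
    · rw [Ideal.radical_eq_sInf]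
      refine le_sInf fun J ⟨hJa, hJ⟩ => ?_
      rcases hdim J hJ with h | h
      · exact absurd (Set.mem_biUnion h (hJa (Ideal.mem_span_singleton_self a))) ha'
      · exact (eq_maximalIdeal h).ge
    · exact (Ideal.IsPrime.radical_le_iff inferInstance).mpr (by simpa [Ideal.span_le] using ha)

/-- The equality of the numbers of minimal primes is used to show that every minimal prime of the
completion contracts to a minimal prime of `R`. -/
theorem isNoetherianRing_and_ringKrullDim_le_one {R : Type*} [CommRing R] [IsLocalRing R]
    (hfg : (IsLocalRing.maximalIdeal R).FG)
    (hsep : ⨅ i : ℕ, IsLocalRing.maximalIdeal R ^ (i + 1) = ⊥)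
    (hcard : Cardinal.mk (minimalPrimes R) =
      Cardinal.mk (minimalPrimes (AdicCompletion (IsLocalRing.maximalIdeal R) R)))
    (a : R) (ha : IsLocalRing.maximalIdeal R = (Ideal.span {a}).radical) :
    (IsNoetherianRing (R ⧸ nilradical R) ∧ ringKrullDim (R ⧸ nilradical R) ≤ 1) := by
  let S := AdicCompletion (maximalIdeal R) R
  let φ : R →+* S := algebraMap R S
  have hloc : IsLocalRing S := AdicCompletion.isLocalRing_of_fg hfg
  have hmap : maximalIdeal S = (maximalIdeal R).map φ := AdicCompletion.maximalIdeal_eq_map_of_fg hfg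
  have hadic : IsAdicComplete (maximalIdeal S) S := AdicCompletion.isAdicComplete_of_fg hfg
  have hinj : Function.Injective φ := by
    have : IsHausdorff (maximalIdeal R) R := by
      refine ⟨fun x hx => ?_⟩
      rw [← Ideal.mem_bot, ← hsep, Ideal.mem_iInf]
      intro i
      simpa [SModEq.zero] using hx (i + 1)
    exact AdicCompletion.of_injective (maximalIdeal R) R
  have haM : a ∈ maximalIdeal R := ha ▸ Ideal.le_radical (Ideal.mem_span_singleton_self a)
  have haS : φ a ∈ maximalIdeal S := hmap ▸ Ideal.mem_map_of_mem φ haM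
  have hrad : maximalIdeal S = (Ideal.span {φ a}).radical := by
    refine le_antisymm ?_ ((Ideal.IsPrime.radical_le_iff inferInstance).mpr
      (by simpa [Ideal.span_le] using haS))
    have h := Ideal.map_radical_le φ (I := Ideal.span {a})
    rw [← ha, ← hmap, Ideal.map_span, Set.image_singleton] at h
    exact h
  have hnoeth : IsNoetherianRing S :=
    isNoetherianRing_of_isAdicComplete (maximalIdeal S) (hmap ▸ hfg.map φ) _ haS hrad.le
  have hfinS : (minimalPrimes S).Finite := minimalPrimes.finite_of_isNoetherianRing S
  have hfin : (minimalPrimes R).Finite := by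
    rw [← Set.finite_coe_iff, ← Cardinal.lt_aleph0_iff_finite, hcard,
      Cardinal.lt_aleph0_iff_finite, Set.finite_coe_iff]
    exact hfinS
  have himage : minimalPrimes R = Ideal.comap φ '' minimalPrimes S := by
    -- One inclusion always holds; the finite counts turn it into an equality.
    have hsub := Ideal.minimalPrimes_comap_subset φ ⊥
    rw [Ideal.comap_bot_of_injective φ hinj] at hsub
    refine Set.eq_of_subset_of_ncard_le hsub ?_ (hfinS.image _)
    refine (Set.ncard_image_le hfinS).trans (le_of_eq ?_)
    exact congrArg Cardinal.toNat hcard.symm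
  have hprime : ∀ q : Ideal R, q.IsPrime → q ∈ minimalPrimes R ∨ q = maximalIdeal R := by
    intro q hq
    by_cases haq : a ∈ q
    · refine .inr (le_antisymm (le_maximalIdeal hq.ne_top) ?_)
      rw [ha]
      exact hq.radical_le_iff.mpr (by simpa [Ideal.span_le] using haq)
    left
    by_contra hqmin
    have h3 : ¬ ((q : Set R) ⊆ ⋃ p ∈ minimalPrimes R, (p : Set R)) := by
      refine (Ideal.subset_union_prime_finite hfin (f := id) ⊥ ⊥ fun p hp _ _ => hp.1.1).not.mpr ?_
      rintro ⟨p, hp, hle⟩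
      exact hqmin (le_antisymm hle (hp.2 ⟨hq, bot_le⟩ hle) ▸ hp)
    obtain ⟨x, hxq, hx⟩ := Set.not_subset.mp h3
    have hax : φ a ∈ (Ideal.span {φ x}).radical := by
      rw [Ideal.radical_eq_sInf, Ideal.mem_sInf]
      rintro Q ⟨hxQ, hQ⟩
      by_contra haQ
      have hQmin := mem_minimalPrimes_of_notMem (φ a) hrad Q haQ
      have : Q.comap φ ∈ minimalPrimes R := himage ▸ Set.mem_image_of_mem _ hQmin
      exact hx (Set.mem_biUnion this (hxQ (Ideal.mem_span_singleton_self _)))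
    -- It remains to descend `a ^ k ∈ x S` from the completion to `R`.
    obtain ⟨k, hk⟩ := hax
    rw [Ideal.mem_span_singleton] at hk
    obtain ⟨y, hy⟩ := hk
    obtain ⟨N, hN⟩ := Ideal.exists_pow_le_of_le_radical_of_fg
      (I := maximalIdeal R) (J := Ideal.span {a ^ (k + 1)})
      (by rw [← Ideal.span_singleton_pow, Ideal.radical_pow _ k.succ_ne_zero]; exact ha.le) hfg
    obtain ⟨r, hr⟩ := Ideal.Quotient.mk_surjective (AdicCompletion.evalₐ (maximalIdeal R) N y)
    have hev : ∀ z : R, AdicCompletion.evalₐ (maximalIdeal R) N (φ z) = Ideal.Quotient.mk _ z :=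
      fun z => AdicCompletion.evalₐ_of _ N z
    have h4 := congrArg (AdicCompletion.evalₐ (maximalIdeal R) N) hy
    rw [← map_pow, map_mul, hev, hev, ← hr, ← map_mul, Ideal.Quotient.eq] at h4
    obtain ⟨c, hc⟩ := Ideal.mem_span_singleton.mp (hN h4)
    have hu : IsUnit (1 - a * c) :=
      isUnit_one_sub_self_of_mem_nonunits _ ((maximalIdeal R).mul_mem_right c haM)
    have h5 : a ^ k * (1 - a * c) ∈ q := by
      have : a ^ k * (1 - a * c) = x * r := by linear_combination hc
      exact this ▸ q.mul_mem_right r hxq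
    exact haq (hq.mem_of_pow_mem k ((hq.mem_or_mem h5).resolve_right
      fun h => hq.ne_top (Ideal.eq_top_of_isUnit_mem _ h hu)))
  constructor
  · refine isNoetherian_quotient_nilradical hfin fun p hp => ?_
    have := hp.1.1
    refine IsNoetherianRing.of_prime fun Q hQ => ?_
    rw [← Ideal.map_comap_of_surjective _ Ideal.Quotient.mk_surjective Q]
    rcases hprime _ (hQ.comap (Ideal.Quotient.mk p)) with h | h
    · have hpQ : p ≤ Q.comap (Ideal.Quotient.mk p) := by
        rw [← Ideal.map_le_iff_le_comap, Ideal.map_quotient_self]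
        exact bot_le
      rw [le_antisymm (h.2 ⟨this, bot_le⟩ hpQ) hpQ, Ideal.map_quotient_self]
      exact Submodule.fg_bot
    · rw [h]
      exact hfg.map _
  · refine (ringKrullDim_quotient_le _).trans ?_
    have : Ring.KrullDimLE 1 R := .mk₁ fun I hI => by
      rcases hprime I hI with h | h
      · exact .inl h
      · exact .inr (h ▸ maximalIdeal.isMaximal R)
    exact_mod_cast Ring.krullDimLE_iff.mp this

/-- Let `R` be a generalized local ring (a local ring whose maximal ideal `M` is finitely
generated with `∩_{i>0} M^i = 0`) such that the number of minimal primes of `R` equals the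
number of minimal primes of the `M`-adic completion `R̂` (as cardinals).  Then the maximal
ideal of `R` is the radical of a principal ideal iff `R_red = R/nilradical R` is a
Noetherian ring of Krull dimension at most one. -/
theorem count_minimal_primes {R : Type*} [CommRing R] [IsLocalRing R]
    (hfg : (IsLocalRing.maximalIdeal R).FG)
    (hsep : ⨅ i : ℕ, IsLocalRing.maximalIdeal R ^ (i + 1) = ⊥)
    (hcard : Cardinal.mk (minimalPrimes R) =
      Cardinal.mk (minimalPrimes (AdicCompletion (IsLocalRing.maximalIdeal R) R))) :
    (∃ a : R, IsLocalRing.maximalIdeal R = (Ideal.span {a}).radical) ↔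
      (IsNoetherianRing (R ⧸ nilradical R) ∧ ringKrullDim (R ⧸ nilradical R) ≤ 1) := by
  exact ⟨fun ⟨a, ha⟩ => isNoetherianRing_and_ringKrullDim_le_one hfg hsep hcard a ha,
    exists_maximalIdeal_eq_radical_span⟩
end
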